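/- Under the MS-LS model, for every node i, every integer m ≥ 1 and every previous state l ∈ {1,…,K}, the m-th derivative at x = 1 of the conditional probability generating function G_l of the nodal strength Y_{it} given s_{t-1} = l (equivalently, the m-th factorial moment E[Y_{it}(Y_{it}−1)⋯(Y_{it}−m+1) | s_{t-1} = l]) satisfies G_l^{(m)}(1) = Σ_{k=1}^K q_{lk} G̃_k^{(m)}(1) = Σ_{k=1}^K Σ_{h ∈ H_i} binom(m; h) exp(Σ_{j≠i}(α_i+α_j)h_j) (σ_k²)^{−d/2} b_{h,k} q_{lk}, where G̃_k is the conditional pgf of Y_{it} given s_t = k, H_i is the set of multi-indices h = (h_j)_{j≠i} of nonnegative integers with Σ_{j≠i} h_j = m, binom(m; h) is the multinomial coefficient m!/∏_{j≠i} h_j!, N_i = {j ≠ i : h_j > 0}, and b_{h,k} = (1/σ_k² + Σ_{j∈N_i} 2βh_j/(2βh_jσ_k² + 1))^{−d/2} ∏_{j∈N_i} (2βh_jσ_k² + 1)^{−d/2}. -/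

import Mathlib

open MeasureTheory ProbabilityTheory Real

noncomputable section

/-- Density of the centered isotropic Gaussian `N(0, σ² I_d)` on `ℝ^d`. -/
def gaussPdf (d : ℕ) (σ2 : ℝ) (x : EuclideanSpace ℝ (Fin d)) : ℝ :=
  (2 * Real.pi * σ2) ^ (-(d : ℝ) / 2) * Real.exp (-‖x‖ ^ 2 / (2 * σ2))

/-- The centered isotropic Gaussian measure `N(0, σ² I_d)` on `ℝ^d`. -/
def gaussMeasure (d : ℕ) (σ2 : ℝ) : Measure (EuclideanSpace ℝ (Fin d)) :=
  volume.withDensity fun x => ENNReal.ofReal (gaussPdf d σ2 x)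

/-- Unordered pairs of distinct nodes, represented as ordered pairs `(i, j)` with `i < j`. -/
abbrev Pairs (N : ℕ) : Type := {p : Fin N × Fin N // p.1 < p.2}

/-- Joint law of the latent positions `(Z_i)_{i}` (i.i.d. `N(0, σ² I_d)`) and of the
edge weights `(Y_{ij})_{i<j}`, which given the latent positions are conditionally independent
Poisson variables with intensity `exp (α_i + α_j - β ‖Z_i - Z_j‖²)`. -/
def jointLaw (d N : ℕ) (β : ℝ) (α : Fin N → ℝ) (σ2 : ℝ) :
    Measure ((Fin N → EuclideanSpace ℝ (Fin d)) × (Pairs N → ℕ)) :=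
  (volume.withDensity fun z : Fin N → EuclideanSpace ℝ (Fin d) =>
      ENNReal.ofReal (∏ i, gaussPdf d σ2 (z i))).bind fun z =>
    (Measure.pi fun p : Pairs N =>
        poissonMeasure
          (Real.exp (α p.1.1 + α p.1.2 - β * ‖z p.1.1 - z p.1.2‖ ^ 2)).toNNReal).map
      fun y => (z, y)

/-- The Markov-switching latent space (MS-LS) network model: a hidden `K`-state Markov chain
`s`, state-dependent i.i.d. Gaussian latent positions `Z`, and symmetric edge weights `Y`
that conditionally on the current state (and given the latent positions) are independent
Poisson variables with log-intensity `α i + α j - β ‖Z i k - Z j k‖²`. -/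
structure MSLS (Ω : Type) [MeasurableSpace Ω] where
  /-- the underlying probability measure -/
  P : Measure Ω
  isProb : IsProbabilityMeasure P
  /-- the dimension of the latent space -/
  d : ℕ
  /-- the number of nodes -/
  N : ℕ
  /-- the number of states of the hidden Markov chain -/
  K : ℕ
  β : ℝ
  β_pos : 0 < β
  /-- individual effects -/
  α : Fin N → ℝ
  /-- state-specific variances of the latent positions -/
  σ2 : Fin K → ℝ
  σ2_pos : ∀ k, 0 < σ2 k
  /-- transition probabilities of the hidden Markov chain -/
  q : Fin K → Fin K → ℝ
  q_nonneg : ∀ l k, 0 ≤ q l k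
  q_sum : ∀ l, ∑ k, q l k = 1
  /-- the hidden Markov chain -/
  s : ℕ → Ω → Fin K
  s_meas : ∀ t, Measurable (s t)
  /-- the latent positions in each state -/
  Z : Fin N → Fin K → Ω → EuclideanSpace ℝ (Fin d)
  Z_meas : ∀ i k, Measurable (Z i k)
  /-- the edge weights -/
  Y : Fin N → Fin N → ℕ → Ω → ℕ
  Y_meas : ∀ i j t, Measurable (Y i j t)
  Y_symm : ∀ i j t ω, Y i j t ω = Y j i t ω
  state_pos : ∀ t k, P {ω | s t ω = k} ≠ 0
  /-- Markov transition probabilities -/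
  trans_prob : ∀ t l k, ((P[|{ω | s t ω = l}]) {ω | s (t + 1) ω = k}).toReal = q l k
  /-- conditionally on the current state, the latent positions and the edge weights follow
  the Poisson latent space law -/
  cond_law_state : ∀ t k,
    (P[|{ω | s t ω = k}]).map
        (fun ω => ((fun i => Z i k ω), fun p : Pairs N => Y p.1.1 p.1.2 t ω)) =
      jointLaw d N β α (σ2 k)
  /-- conditionally on the previous and current state, the latent positions and the edge
  weights follow the Poisson latent space law of the current state -/
  cond_law_pair : ∀ t l k, q l k ≠ 0 →
    (P[|{ω | s t ω = l} ∩ {ω | s (t + 1) ω = k}]).map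
        (fun ω => ((fun i => Z i k ω), fun p : Pairs N => Y p.1.1 p.1.2 (t + 1) ω)) =
      jointLaw d N β α (σ2 k)

attribute [instance] MSLS.isProb

/-- The nodal strength `Y_{it} = Σ_{j ≠ i} Y_{ijt}` of node `i` at time `t`. -/
def MSLS.strength {Ω : Type} [MeasurableSpace Ω] (M : MSLS Ω) (i : Fin M.N) (t : ℕ)
    (ω : Ω) : ℕ :=
  ∑ j ∈ Finset.univ.erase i, M.Y i j t ω

end

open scoped ENNReal

/-- The Chu–Vandermonde identity for a finite sum. -/
lemma Nat.choose_sum_eq_sum_piAntidiag {ι : Type*} [DecidableEq ι] (s : Finset ι) (y : ι → ℕ)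
    (m : ℕ) :
    (∑ j ∈ s, y j).choose m = ∑ h ∈ s.piAntidiag m, ∏ j ∈ s, (y j).choose (h j) := by
  induction s using Finset.cons_induction generalizing m with
  | empty =>
    rcases m with _ | m
    · simp
    · simp
  | cons a s ha ih =>
    rw [Finset.sum_cons, Nat.add_choose_eq, Finset.piAntidiag_cons, Finset.sum_disjiUnion]
    refine Finset.sum_congr rfl fun p _ => ?_
    rw [Finset.sum_map, ih, Finset.mul_sum]
    refine Finset.sum_congr rfl fun h hh => ?_
    have ha0 : h a = 0 := by
      by_contra hne
      exact ha ((Finset.mem_piAntidiag.1 hh).2 a hne)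
    rw [Finset.prod_cons]
    congr 1
    · simp [ha0]
    · refine Finset.prod_congr rfl fun j hj => ?_
      have : j ≠ a := fun e => ha (e ▸ hj)
      simp [this]

/-- The multinomial Chu–Vandermonde identity for falling factorials. -/
lemma Nat.descFactorial_sum_eq_sum_piAntidiag {ι : Type*} [DecidableEq ι] (s : Finset ι)
    (y : ι → ℕ) (m : ℕ) :
    (∑ j ∈ s, y j).descFactorial m =
      ∑ h ∈ s.piAntidiag m, Nat.multinomial s h * ∏ j ∈ s, (y j).descFactorial (h j) := by
  rw [Nat.descFactorial_eq_factorial_mul_choose, Nat.choose_sum_eq_sum_piAntidiag, Finset.mul_sum]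
  refine Finset.sum_congr rfl fun h hh => ?_
  simp_rw [Nat.descFactorial_eq_factorial_mul_choose]
  rw [Finset.prod_mul_distrib, ← (Finset.mem_piAntidiag.1 hh).1, ← Nat.multinomial_spec]
  ring

lemma lintegral_descFactorial_poissonMeasure (r : NNReal) (h : ℕ) :
    ∫⁻ n, (n.descFactorial h : ℝ≥0∞) ∂poissonMeasure r = (r : ℝ≥0∞) ^ h := by
  have hone : ∑' n, poissonMeasure r {n} = 1 := by
    have := lintegral_countable' (μ := poissonMeasure r) (fun _ => 1)
    simpa using this.symm
  have hshift (n : ℕ) : ((n + h).descFactorial h : ℝ≥0∞) * poissonMeasure r {n + h} =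
      (r : ℝ≥0∞) ^ h * poissonMeasure r {n} := by
    rw [poissonMeasure_singleton, poissonMeasure_singleton, ← ENNReal.ofReal_natCast,
      ← ENNReal.ofReal_coe_nnreal, ← ENNReal.ofReal_pow (by positivity),
      ← ENNReal.ofReal_mul (by positivity), ← ENNReal.ofReal_mul (by positivity)]
    congr 1
    have := Nat.factorial_mul_descFactorial (Nat.le_add_left h n)
    rw [Nat.add_sub_cancel] at this
    rw [← this]
    have h1 : ((n.factorial : ℕ) : ℝ) ≠ 0 := by positivity
    have h2 : (((n + h).descFactorial h : ℕ) : ℝ) ≠ 0 := by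
      simp [Nat.descFactorial_eq_zero_iff_lt]
    push_cast
    field_simp
    ring
  rw [lintegral_countable', ← ENNReal.summable.sum_add_tsum_nat_add' (k := h),
    Finset.sum_eq_zero, zero_add]
  · simp_rw [hshift]
    rw [ENNReal.tsum_mul_left, hone, mul_one]
  · intro n hn
    simp [Nat.descFactorial_eq_zero_iff_lt.2 (Finset.mem_range.1 hn)]

lemma lintegral_fin_prod_eq_prod {n : ℕ} {X : Type*} [MeasurableSpace X] (μ : Measure X)
    [SigmaFinite μ] (f : Fin n → X → ℝ≥0∞) (hf : ∀ j, Measurable (f j)) :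
    ∫⁻ x, ∏ j, f j (x j) ∂Measure.pi (fun _ : Fin n => μ) = ∏ j, ∫⁻ x, f j x ∂μ := by
  induction n with
  | zero => simp
  | succ n ih =>
    rw [← ((measurePreserving_piFinSuccAbove (fun _ => μ) 0).symm).lintegral_comp (by fun_prop)]
    simp only [MeasurableEquiv.piFinSuccAbove_symm_apply, Fin.insertNthEquiv,
      Fin.prod_univ_succ, Fin.insertNth_zero, Equiv.coe_fn_mk, Fin.cons_succ, Fin.cons_zero,
      cast_eq]
    rw [lintegral_prod_mul (g := fun x : Fin n → X => ∏ j, f (Fin.succ j) (x j))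
      (hf 0).aemeasurable (Finset.measurable_fun_prod _ fun j _ =>
        (hf _).comp (measurable_pi_apply j)).aemeasurable, ih _ fun j => hf _]

lemma lintegral_exp_neg_mul_sq_norm (d : ℕ) {b : ℝ} (hb : 0 < b) :
    ∫⁻ v : EuclideanSpace ℝ (Fin d), ENNReal.ofReal (rexp (-b * ‖v‖ ^ 2)) =
      ENNReal.ofReal ((π / b) ^ ((d : ℝ) / 2)) := by
  have key := GaussianFourier.integral_rexp_neg_mul_sq_norm (V := EuclideanSpace ℝ (Fin d)) hb
  rw [finrank_euclideanSpace_fin] at key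
  rw [← key, ofReal_integral_eq_lintegral_ofReal _ (.of_forall fun _ => by positivity)]
  refine not_imp_comm.1 integral_undef ?_
  rw [key]
  positivity

/-- The Gaussian smoothing of a Gaussian kernel. -/
lemma lintegral_gaussPdf_mul_exp (d : ℕ) {v c : ℝ} (hv : 0 < v) (hc : 0 ≤ c)
    (x : EuclideanSpace ℝ (Fin d)) :
    ∫⁻ w, ENNReal.ofReal (gaussPdf d v w * rexp (-c * ‖x - w‖ ^ 2)) =
      ENNReal.ofReal ((2 * c * v + 1) ^ (-(d : ℝ) / 2) *
        rexp (-(c / (2 * c * v + 1)) * ‖x‖ ^ 2)) := by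
  set b := (2 * c * v + 1) / (2 * v) with hbdef
  have hb : 0 < b := by positivity
  have hsq (w : EuclideanSpace ℝ (Fin d)) :
      gaussPdf d v w * rexp (-c * ‖x - w‖ ^ 2) =
        ((2 * π * v) ^ (-(d : ℝ) / 2) * rexp (-(c / (2 * c * v + 1)) * ‖x‖ ^ 2)) *
          rexp (-b * ‖w - (c / b) • x‖ ^ 2) := by
    rw [gaussPdf, mul_assoc _ (rexp _), mul_assoc _ (rexp _), ← Real.exp_add, ← Real.exp_add]
    congr 2
    rw [norm_sub_sq_real, norm_sub_sq_real, inner_smul_right, norm_smul, mul_pow,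
      Real.norm_eq_abs, sq_abs, real_inner_comm, hbdef]
    field_simp
    ring
  simp_rw [hsq]
  have hpos : 0 ≤ (2 * π * v) ^ (-(d : ℝ) / 2) * rexp (-(c / (2 * c * v + 1)) * ‖x‖ ^ 2) := by
    positivity
  simp_rw [ENNReal.ofReal_mul hpos]
  rw [lintegral_const_mul _ (by fun_prop),
    lintegral_sub_right_eq_self (fun w => ENNReal.ofReal (rexp (-b * ‖w‖ ^ 2))),
    lintegral_exp_neg_mul_sq_norm d hb, ← ENNReal.ofReal_mul hpos]
  congr 1
  rw [mul_right_comm]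
  congr 1
  have : π / b = (2 * π * v) * (2 * c * v + 1)⁻¹ := by rw [hbdef]; field_simp
  rw [this, Real.mul_rpow (x := 2 * π * v) (by positivity) (by positivity), ← mul_assoc,
    ← Real.rpow_add (by positivity), Real.inv_rpow (by positivity), ← Real.rpow_neg (by positivity)]
  ring_nf
  simp

lemma measurable_gaussPdf (d : ℕ) (v : ℝ) : Measurable (gaussPdf d v) := by
  unfold gaussPdf
  fun_prop

lemma gaussPdf_nonneg (d : ℕ) {v : ℝ} (hv : 0 < v) (x : EuclideanSpace ℝ (Fin d)) :
    0 ≤ gaussPdf d v x := by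
  unfold gaussPdf
  positivity

/-- The Gaussian average of a product of Gaussian kernels attached to the star centred at `i`. -/
lemma lintegral_prod_gaussPdf_mul_prod_exp (d N : ℕ) {v : ℝ} (hv : 0 < v) (i : Fin N)
    (c : Fin N → ℝ) (hc : ∀ j, 0 ≤ c j) (hci : c i = 0) :
    ∫⁻ z : Fin N → EuclideanSpace ℝ (Fin d),
        ENNReal.ofReal ((∏ j, gaussPdf d v (z j)) * ∏ j, rexp (-c j * ‖z i - z j‖ ^ 2)) =
      ENNReal.ofReal (v ^ (-(d : ℝ) / 2) *
        ((1 / v + ∑ j, 2 * c j / (2 * c j * v + 1)) ^ (-(d : ℝ) / 2) *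
          ∏ j, (2 * c j * v + 1) ^ (-(d : ℝ) / 2))) := by
  obtain _ | n := N
  · exact i.elim0
  have hmeas := measurable_gaussPdf d v
  have hpos := gaussPdf_nonneg d hv
  rw [← (volume_preserving_piFinSuccAbove
    (fun _ => EuclideanSpace ℝ (Fin d)) i).symm.lintegral_comp (by fun_prop)]
  simp only [MeasurableEquiv.piFinSuccAbove_symm_apply, Fin.insertNthEquiv, Equiv.coe_fn_mk,
    Fin.prod_univ_succAbove _ i, Fin.sum_univ_succAbove _ i, Fin.insertNth_apply_same,
    Fin.insertNth_apply_succAbove, hci, neg_zero, zero_mul, Real.exp_zero, one_mul, mul_zero,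
    zero_div, zero_add, Real.one_rpow]
  obtain ⟨e, he⟩ : ∃ e : Fin n → ℝ, ∀ j, c (i.succAbove j) = e j := ⟨_, fun _ => rfl⟩
  have he0 (j) : 0 ≤ e j := he j ▸ hc _
  simp only [he]
  have hfac (p : EuclideanSpace ℝ (Fin d) × (Fin n → EuclideanSpace ℝ (Fin d))) :
      ENNReal.ofReal ((gaussPdf d v p.1 * ∏ j, gaussPdf d v (p.2 j)) *
          ∏ j, rexp (-e j * ‖p.1 - p.2 j‖ ^ 2)) =
        ENNReal.ofReal (gaussPdf d v p.1) *
          ∏ j, ENNReal.ofReal (gaussPdf d v (p.2 j) * rexp (-e j * ‖p.1 - p.2 j‖ ^ 2)) := by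
    rw [mul_assoc, ← Finset.prod_mul_distrib, ENNReal.ofReal_mul (hpos _),
      ENNReal.ofReal_prod_of_nonneg fun j _ => mul_nonneg (hpos _) (Real.exp_nonneg _)]
  simp_rw [hfac]
  rw [Measure.volume_eq_prod, lintegral_prod _ (by fun_prop)]
  have hinner (x : EuclideanSpace ℝ (Fin d)) :
      ∫⁻ w : Fin n → EuclideanSpace ℝ (Fin d), ENNReal.ofReal (gaussPdf d v x) *
          ∏ j, ENNReal.ofReal (gaussPdf d v (w j) * rexp (-e j * ‖x - w j‖ ^ 2)) =
        ENNReal.ofReal (((2 * π * v) ^ (-(d : ℝ) / 2) * ∏ j, (2 * e j * v + 1) ^ (-(d : ℝ) / 2)) *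
          rexp (-(1 / (2 * v) + ∑ j, e j / (2 * e j * v + 1)) * ‖x‖ ^ 2)) := by
    rw [lintegral_const_mul _ (by fun_prop), volume_pi, lintegral_fin_prod_eq_prod volume
      (fun j w => ENNReal.ofReal (gaussPdf d v w * rexp (-e j * ‖x - w‖ ^ 2)))
      (fun j => by fun_prop)]
    simp_rw [lintegral_gaussPdf_mul_exp d hv (he0 _)]
    have hden (j) : 0 ≤ 2 * e j * v + 1 := by have := he0 j; positivity
    rw [← ENNReal.ofReal_prod_of_nonneg fun j _ =>
      mul_nonneg (Real.rpow_nonneg (hden j) _) (Real.exp_nonneg _), ← ENNReal.ofReal_mul (hpos _),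
      Finset.prod_mul_distrib, ← Real.exp_sum, gaussPdf, mul_mul_mul_comm, ← Real.exp_add,
      ← Finset.sum_mul, Finset.sum_neg_distrib]
    congr 3
    field_simp
    ring
  simp_rw [hinner]
  have hden (j) : 0 < 2 * e j * v + 1 := by have := he0 j; positivity
  have hS : 0 ≤ ∑ j, e j / (2 * e j * v + 1) :=
    Finset.sum_nonneg fun j _ => div_nonneg (he0 j) (hden j).le
  have hP : 0 ≤ ∏ j, (2 * e j * v + 1) ^ (-(d : ℝ) / 2) :=
    Finset.prod_nonneg fun j _ => Real.rpow_nonneg (hden j).le _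
  have hC : 0 ≤ (2 * π * v) ^ (-(d : ℝ) / 2) * ∏ j, (2 * e j * v + 1) ^ (-(d : ℝ) / 2) := by
    positivity
  simp_rw [ENNReal.ofReal_mul hC]
  rw [lintegral_const_mul _ (by fun_prop), lintegral_exp_neg_mul_sq_norm d (by positivity),
    ← ENNReal.ofReal_mul hC]
  congr 1
  have h2S : ∑ j, 2 * e j / (2 * e j * v + 1) = 2 * ∑ j, e j / (2 * e j * v + 1) := by
    rw [Finset.mul_sum]
    exact Finset.sum_congr rfl fun j _ => mul_div_assoc _ _ _
  rw [h2S]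
  set S := ∑ j, e j / (2 * e j * v + 1)
  have hA : 0 < 1 / v + 2 * S := by positivity
  have hdiv : π / (1 / (2 * v) + S) = (2 * π) * (1 / v + 2 * S)⁻¹ := by
    field_simp
  generalize ∏ j, (2 * e j * v + 1) ^ (-(d : ℝ) / 2) = Q
  rw [hdiv, Real.mul_rpow (x := 2 * π) (y := v) (by positivity) hv.le,
    Real.mul_rpow (x := 2 * π) (by positivity) (by positivity), Real.inv_rpow hA.le,
    ← Real.rpow_neg hA.le,
    neg_div, Real.rpow_neg (x := 2 * π) (by positivity)]
  have : (2 * π) ^ ((d : ℝ) / 2) ≠ 0 := by positivity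
  field_simp

/-- The edge joining `i` to another node. -/
def edge {N : ℕ} (i : Fin N) (j : {j // j ≠ i}) : Pairs N :=
  if h : i < j then ⟨(i, j), h⟩ else ⟨(j, i), lt_of_le_of_ne (not_lt.1 h) j.2⟩

lemma edge_injective {N : ℕ} (i : Fin N) : Function.Injective (edge i) := by
  rintro ⟨j, hj⟩ ⟨k, hk⟩ h
  simp only [edge] at h
  split_ifs at h <;> simp_all [Prod.ext_iff]

/-- The weight of the edge between `i` and `j`, with `0` on the diagonal. -/
def edgeWeight {N : ℕ} (y : Pairs N → ℕ) (i j : Fin N) : ℕ :=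
  if h : j ≠ i then y (edge i ⟨j, h⟩) else 0

lemma Finset.prod_erase_univ_eq_prod_subtype {N : ℕ} {M : Type*} [CommMonoid M] (i : Fin N)
    (f : Fin N → M) : ∏ j ∈ Finset.univ.erase i, f j = ∏ j : {j // j ≠ i}, f j :=
  Finset.prod_subtype _ (by simp) f

/-- The factorial moments of the strength of a node of a network with independent Poisson edges. -/
lemma lintegral_descFactorial_sum_edgeWeight {N : ℕ} (r : Pairs N → NNReal) (i : Fin N) (m : ℕ) :
    ∫⁻ y, ((∑ j ∈ Finset.univ.erase i, edgeWeight y i j).descFactorial m : ℝ≥0∞)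
        ∂Measure.pi (fun p => poissonMeasure (r p)) =
      ∑ h ∈ (Finset.univ.erase i).piAntidiag m, (Nat.multinomial (Finset.univ.erase i) h : ℝ≥0∞) *
        ∏ j : {j // j ≠ i}, (r (edge i j) : ℝ≥0∞) ^ h j := by
  simp_rw [Nat.descFactorial_sum_eq_sum_piAntidiag]
  push_cast
  rw [lintegral_finsetSum _ fun h _ => measurable_of_countable _]
  refine Finset.sum_congr rfl fun h _ => ?_
  rw [lintegral_const_mul _ (measurable_of_countable _)]
  congr 1
  have hind : iIndepFun (fun (j : {j // j ≠ i}) (y : Pairs N → ℕ) =>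
      ((y (edge i j)).descFactorial (h j) : ℝ≥0∞))
      (Measure.pi fun p => poissonMeasure (r p)) :=
    ((iIndepFun_pi (μ := fun p => poissonMeasure (r p)) (X := fun _ => id)
      fun _ => aemeasurable_id).precomp (edge_injective i)).comp
      (fun j n => ((n.descFactorial (h j) : ℕ) : ℝ≥0∞)) fun _ => measurable_of_countable _
  simp_rw [Finset.prod_erase_univ_eq_prod_subtype]
  have hedge (y : Pairs N → ℕ) (j : {j // j ≠ i}) : edgeWeight y i j = y (edge i j) := by
    simp [edgeWeight, j.2]
  simp_rw [hedge]
  rw [lintegral_prod_eq_prod_lintegral_of_indepFun _ _ hind fun _ => measurable_of_countable _]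
  refine Finset.prod_congr rfl fun j _ => ?_
  rw [← lintegral_descFactorial_poissonMeasure]
  exact (measurePreserving_eval (fun p => poissonMeasure (r p)) (edge i j)).lintegral_comp
    (f := fun n => (n.descFactorial (h j) : ℝ≥0∞)) (measurable_of_countable _)

lemma measurable_poissonMeasure : Measurable poissonMeasure := by
  refine Measure.measurable_of_measurable_coe _ fun s hs => ?_
  simp_rw [poissonMeasure, Measure.sum_apply _ hs]
  simp only [Measure.smul_apply, smul_eq_mul]
  fun_prop

lemma measurable_map_prodMk_pi {X ι : Type*} [MeasurableSpace X] [Fintype ι]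
    {κ : X → ι → Measure ℕ} [∀ x p, IsProbabilityMeasure (κ x p)]
    (hκ : ∀ p, Measurable fun x => κ x p) :
    Measurable fun x => (Measure.pi (κ x)).map fun y => (x, y) := by
  refine Measure.measurable_of_measurable_coe _ fun s hs => ?_
  have (x : X) : (Measure.pi (κ x)).map (fun y => (x, y)) s =
      ∑' y, s.indicator 1 (x, y) * ∏ p, κ x p {y p} := by
    rw [← lintegral_indicator_one hs, lintegral_map (measurable_one.indicator hs) (by fun_prop),
      lintegral_countable']
    simp_rw [Measure.pi_singleton]
  simp_rw [this]
  refine Measurable.tsum fun y => Measurable.mul ?_ ?_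
  · exact (measurable_one.indicator hs).comp (by fun_prop)
  · exact Finset.measurable_fun_prod _ fun p _ =>
      (Measure.measurable_coe (measurableSet_singleton _)).comp (hκ p)

/-- The closed form of the within-state factorial moment of the nodal strength. -/
noncomputable def strengthFactorialMoment (d N : ℕ) (β : ℝ) (α : Fin N → ℝ) (v : ℝ)
    (i : Fin N) (m : ℕ) : ℝ :=
  ∑ h ∈ (Finset.univ.erase i).piAntidiag m,
    (Nat.multinomial (Finset.univ.erase i) h : ℝ) *
      Real.exp (∑ j ∈ Finset.univ.erase i, (α i + α j) * (h j : ℝ)) *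
      v ^ (-(d : ℝ) / 2) *
      ((1 / v +
          ∑ j ∈ (Finset.univ.erase i).filter (fun j => 0 < h j),
            2 * β * (h j : ℝ) / (2 * β * (h j : ℝ) * v + 1)) ^ (-(d : ℝ) / 2) *
        ∏ j ∈ (Finset.univ.erase i).filter (fun j => 0 < h j),
          (2 * β * (h j : ℝ) * v + 1) ^ (-(d : ℝ) / 2))

lemma strengthFactorialMoment_nonneg (d N : ℕ) {β : ℝ} (hβ : 0 < β) (α : Fin N → ℝ) {v : ℝ}
    (hv : 0 < v) (i : Fin N) (m : ℕ) : 0 ≤ strengthFactorialMoment d N β α v i m := by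
  unfold strengthFactorialMoment
  positivity

lemma rate_edge {d N : ℕ} (β : ℝ) (α : Fin N → ℝ) (z : Fin N → EuclideanSpace ℝ (Fin d))
    (i : Fin N) (j : {j // j ≠ i}) :
    α (edge i j).1.1 + α (edge i j).1.2 - β * ‖z (edge i j).1.1 - z (edge i j).1.2‖ ^ 2 =
      α i + α j - β * ‖z i - z j‖ ^ 2 := by
  unfold edge
  split_ifs
  · rfl
  · simp only [norm_sub_rev (z j), add_comm (α j)]

lemma measurable_descFactorial_sum_edgeWeight_snd {N : ℕ} {X : Type*} [MeasurableSpace X]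
    (i : Fin N) (m : ℕ) :
    Measurable fun x : X × (Pairs N → ℕ) =>
      ((∑ j ∈ Finset.univ.erase i, edgeWeight x.2 i j).descFactorial m : ℝ≥0∞) :=
  (measurable_of_countable fun y : Pairs N → ℕ =>
    ((∑ j ∈ Finset.univ.erase i, edgeWeight y i j).descFactorial m : ℝ≥0∞)).comp measurable_snd

/-- The factorial moments of the strength of a node under the Poisson latent space law. -/
lemma lintegral_descFactorial_jointLaw (d N : ℕ) {β : ℝ} (hβ : 0 < β) (α : Fin N → ℝ) {v : ℝ}
    (hv : 0 < v) (i : Fin N) (m : ℕ) :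
    ∫⁻ x, ((∑ j ∈ Finset.univ.erase i, edgeWeight x.2 i j).descFactorial m : ℝ≥0∞)
        ∂jointLaw d N β α v = ENNReal.ofReal (strengthFactorialMoment d N β α v i m) := by
  have hpdf := measurable_gaussPdf d v
  have hκ : Measurable fun z : Fin N → EuclideanSpace ℝ (Fin d) =>
      (Measure.pi fun p : Pairs N => poissonMeasure
        (Real.exp (α p.1.1 + α p.1.2 - β * ‖z p.1.1 - z p.1.2‖ ^ 2)).toNNReal).map
          fun y => (z, y) :=
    measurable_map_prodMk_pi fun p => measurable_poissonMeasure.comp (by fun_prop)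
  rw [jointLaw, Measure.lintegral_bind hκ.aemeasurable
    (measurable_descFactorial_sum_edgeWeight_snd i m).aemeasurable]
  have hinner (z : Fin N → EuclideanSpace ℝ (Fin d)) :
      ∫⁻ x, ((∑ j ∈ Finset.univ.erase i, edgeWeight x.2 i j).descFactorial m : ℝ≥0∞)
        ∂(Measure.pi fun p : Pairs N => poissonMeasure
          (Real.exp (α p.1.1 + α p.1.2 - β * ‖z p.1.1 - z p.1.2‖ ^ 2)).toNNReal).map
            (fun y => (z, y)) =
      ∑ h ∈ (Finset.univ.erase i).piAntidiag m, ENNReal.ofReal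
        ((Nat.multinomial (Finset.univ.erase i) h : ℝ) *
          Real.exp (∑ j ∈ Finset.univ.erase i, (α i + α j) * (h j : ℝ)) *
          ∏ j, Real.exp (-(β * h j) * ‖z i - z j‖ ^ 2)) := by
    rw [lintegral_map (measurable_descFactorial_sum_edgeWeight_snd i m) (by fun_prop),
      lintegral_descFactorial_sum_edgeWeight]
    refine Finset.sum_congr rfl fun h hh => ?_
    simp_rw [rate_edge]
    have hi : h i = 0 := by
      by_contra hne
      simpa using (Finset.mem_piAntidiag.1 hh).2 i hne
    rw [mul_assoc, ENNReal.ofReal_mul (by positivity), ENNReal.ofReal_natCast,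
      ← Finset.prod_erase Finset.univ (a := i) (by simp), Real.exp_sum, ← Finset.prod_mul_distrib,
      Finset.prod_erase_univ_eq_prod_subtype, ENNReal.ofReal_prod_of_nonneg fun _ _ => by positivity]
    congr 1
    refine Finset.prod_congr rfl fun j _ => ?_
    change ENNReal.ofReal _ ^ _ = _
    rw [← ENNReal.ofReal_pow (by positivity), ← Real.exp_nat_mul, ← Real.exp_add]
    ring_nf
  simp_rw [hinner]
  rw [lintegral_withDensity_eq_lintegral_mul _ (by fun_prop) (by fun_prop)]
  simp only [Pi.mul_apply, Finset.mul_sum]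
  rw [lintegral_finsetSum _ fun h _ => by fun_prop, strengthFactorialMoment,
    ENNReal.ofReal_sum_of_nonneg fun h _ => by positivity]
  refine Finset.sum_congr rfl fun h hh => ?_
  have hi : h i = 0 := by
    by_contra hne
    simpa using (Finset.mem_piAntidiag.1 hh).2 i hne
  have hpos (z : Fin N → EuclideanSpace ℝ (Fin d)) : 0 ≤ ∏ j, gaussPdf d v (z j) :=
    Finset.prod_nonneg fun _ _ => gaussPdf_nonneg d hv _
  have hswap (z : Fin N → EuclideanSpace ℝ (Fin d)) :
      ENNReal.ofReal (∏ j, gaussPdf d v (z j)) * ENNReal.ofReal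
        ((Nat.multinomial (Finset.univ.erase i) h : ℝ) *
          Real.exp (∑ j ∈ Finset.univ.erase i, (α i + α j) * (h j : ℝ)) *
          ∏ j, Real.exp (-(β * h j) * ‖z i - z j‖ ^ 2)) =
      ENNReal.ofReal ((Nat.multinomial (Finset.univ.erase i) h : ℝ) *
          Real.exp (∑ j ∈ Finset.univ.erase i, (α i + α j) * (h j : ℝ))) *
        ENNReal.ofReal ((∏ j, gaussPdf d v (z j)) *
          ∏ j, Real.exp (-(β * h j) * ‖z i - z j‖ ^ 2)) := by
    rw [← ENNReal.ofReal_mul (hpos z), ← ENNReal.ofReal_mul (by positivity), mul_left_comm]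
  simp_rw [hswap]
  rw [lintegral_const_mul _ (by fun_prop),
    lintegral_prod_gaussPdf_mul_prod_exp d N hv i (fun j => β * h j) (fun j => by positivity)
      (by simp [hi]), ← ENNReal.ofReal_mul (by positivity)]
  have hsub : (Finset.univ.erase i).filter (fun j => 0 < h j) ⊆ Finset.univ :=
    Finset.subset_univ _
  have hzero (j : Fin N) (hj : j ∉ (Finset.univ.erase i).filter (fun j => 0 < h j)) : h j = 0 := by
    by_contra hne
    refine hj (Finset.mem_filter.2 ⟨Finset.mem_erase.2 ⟨?_, Finset.mem_univ _⟩, by omega⟩)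
    rintro rfl
    exact hne hi
  rw [Finset.sum_subset hsub fun j _ hj => by simp [hzero j hj],
    Finset.prod_subset hsub fun j _ hj => by simp [hzero j hj]]
  simp only [mul_assoc]

lemma MSLS.strength_eq {Ω : Type} [MeasurableSpace Ω] (M : MSLS Ω) (i : Fin M.N) (t : ℕ) (ω : Ω) :
    M.strength i t ω = ∑ j ∈ Finset.univ.erase i,
      edgeWeight (fun p : Pairs M.N => M.Y p.1.1 p.1.2 t ω) i j := by
  refine Finset.sum_congr rfl fun j hj => ?_
  rw [edgeWeight, dif_pos (Finset.ne_of_mem_erase hj), edge]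
  split_ifs
  · rfl
  · exact M.Y_symm _ _ _ _

lemma MSLS.measurable_strength {Ω : Type} [MeasurableSpace Ω] (M : MSLS Ω) (i : Fin M.N) (t : ℕ) :
    Measurable (M.strength i t) :=
  Finset.measurable_fun_sum _ fun j _ => M.Y_meas i j t

lemma MSLS.lintegral_descFactorial_strength {Ω : Type} [MeasurableSpace Ω] (M : MSLS Ω)
    (i : Fin M.N) (m t : ℕ) (k : Fin M.K) {μ : Measure Ω}
    (hμ : μ.map (fun ω => ((fun i => M.Z i k ω), fun p : Pairs M.N => M.Y p.1.1 p.1.2 t ω)) =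
      jointLaw M.d M.N M.β M.α (M.σ2 k)) :
    ∫⁻ ω, ((M.strength i t ω).descFactorial m : ℝ≥0∞) ∂μ =
      ENNReal.ofReal (strengthFactorialMoment M.d M.N M.β M.α (M.σ2 k) i m) := by
  have hZ := M.Z_meas
  have hY := M.Y_meas
  rw [← lintegral_descFactorial_jointLaw M.d M.N M.β_pos M.α (M.σ2_pos k), ← hμ,
    lintegral_map (measurable_descFactorial_sum_edgeWeight_snd i m) (by fun_prop)]
  simp_rw [M.strength_eq]

lemma MSLS.integral_descFactorial_strength {Ω : Type} [MeasurableSpace Ω] (M : MSLS Ω)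
    (i : Fin M.N) (m t : ℕ) {μ : Measure Ω} {a : ℝ} (ha : 0 ≤ a)
    (h : ∫⁻ ω, ((M.strength i t ω).descFactorial m : ℝ≥0∞) ∂μ = ENNReal.ofReal a) :
    ∫ ω, ((M.strength i t ω).descFactorial m : ℝ) ∂μ = a := by
  have hmeas : Measurable fun ω => ((M.strength i t ω).descFactorial m : ℝ) :=
    (measurable_of_countable fun n : ℕ => (n.descFactorial m : ℝ)).comp (M.measurable_strength i t)
  rw [integral_eq_lintegral_of_nonneg_ae (.of_forall fun _ => by positivity)
    hmeas.aestronglyMeasurable]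
  simp_rw [ENNReal.ofReal_natCast]
  rw [h, ENNReal.toReal_ofReal ha]

/-- Conditioning on the previous state mixes the within-state factorial moments. -/
lemma MSLS.lintegral_descFactorial_strength_cond_prev {Ω : Type} [MeasurableSpace Ω] (M : MSLS Ω)
    (i : Fin M.N) (m t : ℕ) (l : Fin M.K) :
    ∫⁻ ω, ((M.strength i (t + 1) ω).descFactorial m : ℝ≥0∞) ∂(M.P[|{ω | M.s t ω = l}]) =
      ENNReal.ofReal (∑ k, M.q l k *
        strengthFactorialMoment M.d M.N M.β M.α (M.σ2 k) i m) := by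
  have hms (t : ℕ) (k : Fin M.K) : MeasurableSet {ω | M.s t ω = k} :=
    M.s_meas t (measurableSet_singleton k)
  have : IsProbabilityMeasure (M.P[|{ω | M.s t ω = l}]) :=
    cond_isProbabilityMeasure (M.state_pos t l)
  have hnn (k) := strengthFactorialMoment_nonneg M.d M.N M.β_pos M.α (M.σ2_pos k) i m
  rw [← sum_meas_smul_cond_fiber (M.s_meas (t + 1)) (M.P[|{ω | M.s t ω = l}]),
    lintegral_finsetSum_measure,
    ENNReal.ofReal_sum_of_nonneg fun k _ => mul_nonneg (M.q_nonneg l k) (hnn k)]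
  refine Finset.sum_congr rfl fun k _ => ?_
  have hq : (M.P[|{ω | M.s t ω = l}]) (M.s (t + 1) ⁻¹' {k}) = ENNReal.ofReal (M.q l k) := by
    rw [← M.trans_prob t l k, ENNReal.ofReal_toReal (measure_ne_top _ _)]
    rfl
  rw [lintegral_smul_measure, hq, smul_eq_mul, ENNReal.ofReal_mul (M.q_nonneg l k)]
  rcases eq_or_ne (M.q l k) 0 with h0 | h0
  · simp [h0]
  congr 1
  refine M.lintegral_descFactorial_strength i m (t + 1) k ?_
  rw [← M.cond_law_pair t l k h0]
  congr 1
  exact cond_cond_eq_cond_inter (hms t l) (hms (t + 1) k) M.P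

/-- Under the MS-LS model, the `m`-th derivative at `x = 1` of the conditional
pgf of the nodal strength given `s_{t-1} = l` (equivalently, the `m`-th factorial moment of the
nodal strength given `s_{t-1} = l`) is the `q_{lk}`-mixture of the within-state `m`-th factorial
moments, and is given by the explicit closed form. -/
theorem statement0 {Ω : Type} [MeasurableSpace Ω] (M : MSLS Ω) (i : Fin M.N)
    (m : ℕ) (hm : 1 ≤ m) (t : ℕ) (l : Fin M.K) :
    (∫ ω, (Nat.descFactorial (M.strength i (t + 1) ω) m : ℝ)
        ∂(M.P[|{ω | M.s t ω = l}]) =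
      ∑ k, M.q l k *
        ∫ ω, (Nat.descFactorial (M.strength i (t + 1) ω) m : ℝ)
          ∂(M.P[|{ω | M.s (t + 1) ω = k}])) ∧
    (∫ ω, (Nat.descFactorial (M.strength i (t + 1) ω) m : ℝ)
        ∂(M.P[|{ω | M.s t ω = l}]) =
      ∑ k, ∑ h ∈ (Finset.Nat.antidiagonalTuple M.N m).filter (fun h => h i = 0),
        (Nat.multinomial (Finset.univ.erase i) h : ℝ) *
          Real.exp (∑ j ∈ Finset.univ.erase i, (M.α i + M.α j) * (h j : ℝ)) *
          (M.σ2 k) ^ (-(M.d : ℝ) / 2) *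
          ((1 / M.σ2 k +
              ∑ j ∈ (Finset.univ.erase i).filter (fun j => 0 < h j),
                2 * M.β * (h j : ℝ) / (2 * M.β * (h j : ℝ) * M.σ2 k + 1)) ^
              (-(M.d : ℝ) / 2) *
            ∏ j ∈ (Finset.univ.erase i).filter (fun j => 0 < h j),
              (2 * M.β * (h j : ℝ) * M.σ2 k + 1) ^ (-(M.d : ℝ) / 2)) *
          M.q l k) := by
  have hnn (k) := strengthFactorialMoment_nonneg M.d M.N M.β_pos M.α (M.σ2_pos k) i m
  have hprev := M.integral_descFactorial_strength i m (t + 1)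
    (Finset.sum_nonneg fun k _ => mul_nonneg (M.q_nonneg l k) (hnn k))
    (M.lintegral_descFactorial_strength_cond_prev i m t l)
  refine ⟨?_, ?_⟩
  · rw [hprev]
    refine Finset.sum_congr rfl fun k _ => ?_
    rw [M.integral_descFactorial_strength i m (t + 1) (hnn k)
      (M.lintegral_descFactorial_strength i m (t + 1) k (M.cond_law_state (t + 1) k))]
  · rw [hprev]
    refine Finset.sum_congr rfl fun k _ => ?_
    have hidx : (Finset.Nat.antidiagonalTuple M.N m).filter (fun h => h i = 0) =
        (Finset.univ.erase i).piAntidiag m := by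
      ext h
      simp only [Finset.mem_filter, Finset.Nat.mem_antidiagonalTuple, Finset.mem_piAntidiag,
        Finset.mem_erase, Finset.mem_univ, and_true]
      constructor
      · rintro ⟨hsum, hi⟩
        refine ⟨by rw [← hsum, Finset.sum_erase _ hi], ?_⟩
        rintro j hj rfl
        exact hj hi
      · rintro ⟨hsum, hi⟩
        have h0 : h i = 0 := by
          by_contra hne
          exact hi i hne rfl
        exact ⟨by rw [← hsum, Finset.sum_erase _ h0], h0⟩
    rw [hidx, mul_comm, strengthFactorialMoment, Finset.sum_mul]
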